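/- Assume Q_k = k + O(1), and let X, Y be sequences of positive reals with ln X_k = α_θ·ln k + o(1) and φ_j(X,Y) = Q_j for all j. For ε ≥ 0 define w_j := (Σ_{k≥1} P(X_k, Y_j)·k^{−ε})/(Σ_{k≥1} P(X_k, Y_j)). Then: (i) if 0 ≤ ε < α_θ + 1, then j^{ε}·w_j → S_ε/S_0 as j → ∞; (ii) if ε ≥ α_θ + 1, then j^{ε}·w_j → ∞ as j → ∞. -/

import Mathlib

open Filter Asymptotics MeasureTheory
open scoped ENNReal Topology

/-- `Theta θ E' E` is the argument of the complex number `E' + E·e^{iθ}`;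
for `0 < θ < π` and `E', E > 0` it lies in `(0, θ)` and equals
`arctan (sin θ / (E'/E + cos θ))` with the branch taken in `(0, θ)`. -/
noncomputable def Theta (θ E' E : ℝ) : ℝ :=
  Complex.arg ((E' : ℂ) + (E : ℂ) * Complex.exp (θ * Complex.I))

/-- `phi θ X Y j = (1/π) · ∑_{k ≥ 1} Θ(X_k, Y_j) ∈ (0, ∞]`, where sequences are
indexed by `ℕ` and only the values at indices `k ≥ 1` are used. -/
noncomputable def phi (θ : ℝ) (X Y : ℕ → ℝ) (j : ℕ) : ℝ≥0∞ :=
  ENNReal.ofReal (1 / Real.pi) * ∑' k : ℕ, ENNReal.ofReal (Theta θ (X (k + 1)) (Y j))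

/-- `Pker θ E E' = E·E' / (E² + 2·cos θ·E·E' + E'²)`. -/
noncomputable def Pker (θ E E' : ℝ) : ℝ :=
  E * E' / (E ^ 2 + 2 * Real.cos θ * E * E' + E' ^ 2)

/-- The drift `D_α = (1/π) ∫_0^∞ Θ(s^α, 1) ds`. -/
noncomputable def Drift (θ α : ℝ) : ℝ :=
  (1 / Real.pi) * ∫ s in Set.Ioi (0 : ℝ), Theta θ (s ^ α) 1

/-- `S_ε = ∫_0^∞ s^{-ε} / (s^{α_θ} + 2 cos θ + s^{-α_θ}) ds` with `α_θ = 1 + θ/π`. -/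
noncomputable def Sfun (θ ε : ℝ) : ℝ :=
  ∫ s in Set.Ioi (0 : ℝ), s ^ (-ε) /
    (s ^ (1 + θ / Real.pi) + 2 * Real.cos θ + s ^ (-(1 + θ / Real.pi)))

/-! ### Facts about Theta -/

lemma aux_z (θ x : ℝ) : ((x : ℂ) + ((1 : ℝ) : ℂ) * Complex.exp (θ * Complex.I)) =
    ⟨x + Real.cos θ, Real.sin θ⟩ := by
  apply Complex.ext <;> simp [Complex.exp_re, Complex.exp_im]

lemma Theta_one (θ x : ℝ) : Theta θ x 1 = Complex.arg ⟨x + Real.cos θ, Real.sin θ⟩ := by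
  rw [Theta, aux_z]

lemma Theta_scale (θ x y : ℝ) (hy : 0 < y) : Theta θ x y = Theta θ (x / y) 1 := by
  unfold Theta
  symm
  rw [← Complex.arg_real_mul _ hy]
  congr 1
  have : (y : ℂ) ≠ 0 := by exact_mod_cast hy.ne'
  push_cast
  field_simp

lemma Theta_nonneg (θ x : ℝ) (hθ : 0 < θ) (hθπ : θ < Real.pi) : 0 ≤ Theta θ x 1 := by
  rw [Theta_one, Complex.arg_nonneg_iff]
  exact (Real.sin_pos_of_pos_of_lt_pi hθ hθπ).le

lemma Theta_le_pi (θ x : ℝ) : Theta θ x 1 ≤ Real.pi := by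
  rw [Theta_one]; exact Complex.arg_le_pi _

lemma Theta_le_inv (θ x : ℝ) (hx : 0 < x) : 
    Theta θ x 1 ≤ 2 * Real.pi * x⁻¹ := by
  have hpi := Real.pi_gt_three
  rcases lt_or_ge x 2 with h | h
  · refine (Theta_le_pi θ x).trans ?_
    rw [← div_eq_mul_inv, le_div_iff₀ hx]
    nlinarith
  · have h1 : 0 < x + Real.cos θ := by linarith [Real.neg_one_le_cos θ]
    have h3 : x / 2 ≤ x + Real.cos θ := by linarith [Real.neg_one_le_cos θ]
    rw [Theta_one, Complex.arg_of_re_nonneg (by exact h1.le)]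
    have hn : x + Real.cos θ ≤ ‖(⟨x + Real.cos θ, Real.sin θ⟩ : ℂ)‖ :=
      Complex.re_le_norm ⟨x + Real.cos θ, Real.sin θ⟩
    set N := ‖(⟨x + Real.cos θ, Real.sin θ⟩ : ℂ)‖
    have hN : 0 < N := h1.trans_le hn
    have hb : Real.sin θ / N ≤ 2 / x := by
      rw [div_le_div_iff₀ hN (by linarith)]
      nlinarith [Real.sin_le_one θ]
    have hmono : Real.arcsin (Real.sin θ / N) ≤ Real.arcsin (2 / x) := Real.monotone_arcsin hb
    have h2x : 0 ≤ 2 / x := by positivity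
    have h2x1 : 2 / x ≤ 1 := by rw [div_le_one hx]; exact h
    have := Real.mul_le_sin (Real.arcsin_nonneg.2 h2x) (Real.arcsin_le_pi_div_two _)
    rw [Real.sin_arcsin (by linarith) h2x1] at this
    refine hmono.trans ?_
    have h5 : Real.pi * (2 / Real.pi * Real.arcsin (2 / x)) ≤ Real.pi * (2 / x) := by gcongr
    have h6 : Real.pi * (2 / Real.pi * Real.arcsin (2 / x)) = 2 * Real.arcsin (2 / x) := by
      field_simp
    have h7 : Real.pi * (2 / x) = 2 * Real.pi * x⁻¹ := by ring
    rw [h6, h7] at h5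
    have := Real.arcsin_nonneg.2 h2x
    linarith

lemma den_pos (θ x : ℝ) (hθ : 0 < θ) (hθπ : θ < Real.pi) : 
    0 < x ^ 2 + 2 * Real.cos θ * x + 1 := by
  have := Real.sin_pos_of_pos_of_lt_pi hθ hθπ
  nlinarith [Real.sin_sq_add_cos_sq θ, sq_nonneg (x + Real.cos θ)]

lemma Theta_hasDerivAt (θ x : ℝ) (hθ : 0 < θ) (hθπ : θ < Real.pi) :
    HasDerivAt (fun x => Theta θ x 1)
      (-Real.sin θ / (x ^ 2 + 2 * Real.cos θ * x + 1)) x := by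
  have hs := Real.sin_pos_of_pos_of_lt_pi hθ hθπ
  have h1 : HasDerivAt (fun x : ℝ => (x : ℂ) + ((1 : ℝ) : ℂ) * Complex.exp (θ * Complex.I)) 1 x :=
    (Complex.ofRealCLM.hasDerivAt (x := x)).add_const _ 
  have h2 := h1.clog_real (by
    rw [aux_z, Complex.mem_slitPlane_iff]; right; exact hs.ne')
  have h3 := (Complex.imCLM.hasFDerivAt).comp_hasDerivAt x h2
  have h4 : (fun x => Theta θ x 1) = (Complex.imCLM ∘ fun t : ℝ =>
      Complex.log ((t : ℂ) + ((1 : ℝ) : ℂ) * Complex.exp (θ * Complex.I))) := by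
    funext t
    simp only [Theta, Function.comp, Complex.imCLM_apply, Complex.log_im]
  rw [h4]
  refine h3.congr_deriv ?_
  rw [aux_z]
  simp only [Complex.imCLM_apply, one_div, Complex.inv_im, Complex.normSq_mk]
  congr 1
  nlinarith [Real.sin_sq_add_cos_sq θ]

lemma Theta_continuous (θ : ℝ) (hθ : 0 < θ) (hθπ : θ < Real.pi) :
    Continuous (fun x => Theta θ x 1) :=
  continuous_iff_continuousAt.2 fun x => (Theta_hasDerivAt θ x hθ hθπ).continuousAt

/-! ### A dominating function -/

/-- `s^(-β)` near zero and `s^(-α)` near infinity -/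
noncomputable def Fdom (β α s : ℝ) : ℝ := if s ≤ 1 then s ^ (-β) else s ^ (-α)

lemma Fdom_integrable (β α : ℝ) (hβ : β < 1) (hα : 1 < α) :
    IntegrableOn (Fdom β α) (Set.Ioi 0) := by
  rw [← Set.Ioc_union_Ioi_eq_Ioi (zero_le_one' ℝ)]
  refine IntegrableOn.union ?_ ?_
  · have : IntegrableOn (fun s : ℝ => s ^ (-β)) (Set.Ioc 0 1) := by
      rw [← intervalIntegrable_iff_integrableOn_Ioc_of_le zero_le_one]
      exact intervalIntegral.intervalIntegrable_rpow' (by linarith)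
    refine this.congr_fun (fun s hs => ?_) measurableSet_Ioc
    simp [Fdom, hs.2]
  · have := integrableOn_Ioi_rpow_of_lt (show -α < -1 by linarith) one_pos
    refine this.congr_fun (fun s hs => ?_) measurableSet_Ioi
    simp only [Set.mem_Ioi] at hs
    simp [Fdom, hs]

lemma Fdom_antitone (β α s u : ℝ) (hβ : 0 ≤ β) (hα : 1 < α) (hs : 0 < s)
    (hsu : s ≤ u) : Fdom β α u ≤ Fdom β α s := by
  unfold Fdom
  have hu : 0 < u := by linarith
  split_ifs with h1 h2 h2
  · exact Real.rpow_le_rpow_of_nonpos hs hsu (by linarith)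
  · linarith
  · push Not at h1
    calc u ^ (-α) ≤ 1 := Real.rpow_le_one_of_one_le_of_nonpos h1.le (by linarith)
      _ ≤ s ^ (-β) := Real.one_le_rpow_of_pos_of_le_one_of_nonpos hs h2 (by linarith)
  · exact Real.rpow_le_rpow_of_nonpos hs hsu (by linarith)

lemma Fdom_zero_ge (α s : ℝ) (hs : 0 < s) : 1 / (1 + s ^ α) ≤ Fdom 0 α s := by
  have := Real.rpow_pos_of_pos hs α
  unfold Fdom
  split_ifs with h
  · simp only [neg_zero, Real.rpow_zero]
    rw [div_le_one (by linarith)]; linarith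
  · rw [Real.rpow_neg hs.le, ← one_div]
    apply one_div_le_one_div_of_le this; linarith

lemma Theta_Fdom (θ α s : ℝ) (hs : 0 < s) :
    Theta θ (s ^ α) 1 ≤ 2 * Real.pi * Fdom 0 α s := by
  unfold Fdom
  split_ifs with h
  · simp only [neg_zero, Real.rpow_zero]
    linarith [Theta_le_pi θ (s ^ α), Real.pi_pos]
  · rw [Real.rpow_neg hs.le]
    exact Theta_le_inv θ _ (Real.rpow_pos_of_pos hs α)

/-! ### The integral of Theta -/

lemma norm_lower (θ x : ℝ) (hx : 0 ≤ x) :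
    Real.cos (θ / 2) * (1 + x) ≤ ‖1 + (x : ℂ) * Complex.exp (-(θ * Complex.I))‖ := by
  have h1 : ‖Complex.exp ((θ / 2 : ℝ) * Complex.I) *
      (1 + (x : ℂ) * Complex.exp (-(θ * Complex.I)))‖ =
      ‖1 + (x : ℂ) * Complex.exp (-(θ * Complex.I))‖ := by
    rw [norm_mul, Complex.norm_exp_ofReal_mul_I, one_mul]
  rw [← h1]
  refine le_trans (le_of_eq ?_) (Complex.re_le_norm _)
  have h2 : Complex.exp ((θ / 2 : ℝ) * Complex.I) *
      (1 + (x : ℂ) * Complex.exp (-(θ * Complex.I))) =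
      Complex.exp ((θ / 2 : ℝ) * Complex.I) + x * Complex.exp ((-(θ / 2) : ℝ) * Complex.I) := by
    rw [mul_add, mul_one, mul_left_comm, ← Complex.exp_add]
    congr 3
    push_cast; ring
  rw [h2, Complex.add_re, Complex.re_ofReal_mul, Complex.exp_ofReal_mul_I_re,
    Complex.exp_ofReal_mul_I_re, Real.cos_neg]
  ring

lemma cos_half_pos (θ : ℝ) (h : θ ∈ Set.Ioo (-Real.pi) Real.pi) : 0 < Real.cos (θ / 2) :=
  Real.cos_pos_of_mem_Ioo ⟨by linarith [h.1], by linarith [h.2]⟩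

/-- the kernel -/
noncomputable def kern (α θ s : ℝ) : ℂ :=
  (1 + ((s ^ α : ℝ) : ℂ) * Complex.exp (-(θ * Complex.I)))⁻¹

/-- its angular derivative divided by `I` -/
noncomputable def kern' (α θ s : ℝ) : ℂ :=
  ((s ^ α : ℝ) : ℂ) * Complex.exp (-(θ * Complex.I)) /
    (1 + ((s ^ α : ℝ) : ℂ) * Complex.exp (-(θ * Complex.I))) ^ 2

lemma kern_norm (α θ s m : ℝ) (hm : 0 < m) (h : m ≤ Real.cos (θ / 2)) (hs : 0 ≤ s) :
    ‖kern α θ s‖ ≤ m⁻¹ * (1 / (1 + s ^ α)) := by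
  have hx := Real.rpow_nonneg hs α
  have h1 := norm_lower θ (s ^ α) hx
  rw [kern, norm_inv, one_div, ← mul_inv]
  apply inv_anti₀ (by positivity)
  refine le_trans ?_ h1
  gcongr

lemma kern'_norm (α θ s m : ℝ) (hm : 0 < m) (h : m ≤ Real.cos (θ / 2)) (hs : 0 ≤ s) :
    ‖kern' α θ s‖ ≤ m⁻¹ ^ 2 * (1 / (1 + s ^ α)) := by
  have hx := Real.rpow_nonneg hs α
  have h1 := kern_norm α θ s m hm h hs
  have h2 : ‖kern' α θ s‖ = s ^ α * ‖kern α θ s‖ ^ 2 := by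
    rw [kern', kern, norm_div, norm_mul, norm_pow, norm_inv]
    have : ‖Complex.exp (-(θ * Complex.I))‖ = 1 := by
      rw [← neg_mul, ← Complex.ofReal_neg, Complex.norm_exp_ofReal_mul_I]
    rw [this, Complex.norm_real, Real.norm_of_nonneg hx, mul_one, inv_pow, div_eq_mul_inv]
  rw [h2]
  calc s ^ α * ‖kern α θ s‖ ^ 2 ≤ s ^ α * (m⁻¹ * (1 / (1 + s ^ α))) ^ 2 := by gcongr
    _ = m⁻¹ ^ 2 * (1 / (1 + s ^ α)) * (s ^ α / (1 + s ^ α)) := by ring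
    _ ≤ m⁻¹ ^ 2 * (1 / (1 + s ^ α)) * 1 := by
      gcongr
      rw [div_le_one (by linarith)]; linarith
    _ = _ := mul_one _

lemma den_ne (θ x : ℝ) (hθ : 0 < Real.cos (θ / 2)) (hx : 0 ≤ x) :
    1 + (x : ℂ) * Complex.exp (-(θ * Complex.I)) ≠ 0 := by
  have := norm_lower θ x hx
  rw [← norm_pos_iff]
  refine lt_of_lt_of_le ?_ this
  positivity

lemma kern_hasDerivAt_theta (α θ s : ℝ) (hθ : 0 < Real.cos (θ / 2)) (hs : 0 ≤ s) :
    HasDerivAt (fun θ => kern α θ s) (Complex.I * kern' α θ s) θ := by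
  have hx := Real.rpow_nonneg hs α
  have h0 := den_ne θ (s ^ α) hθ hx
  have h1 : HasDerivAt (fun θ : ℝ => -((θ : ℂ) * Complex.I)) (-(1 * Complex.I)) θ :=
    ((Complex.ofRealCLM.hasDerivAt (x := θ)).mul_const _).neg
  have h2 := ((h1.cexp.const_mul ((s ^ α : ℝ) : ℂ)).const_add 1).inv h0
  refine h2.congr_deriv ?_
  rw [kern']
  ring

lemma kern_hasDerivAt_s (α θ s : ℝ) (hθ : 0 < Real.cos (θ / 2)) (hs : 0 < s) :
    HasDerivAt (fun s : ℝ => (s : ℂ) * kern α θ s) (kern α θ s - α * kern' α θ s) s := by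
  have hx := Real.rpow_nonneg hs.le α
  have h0 := den_ne θ (s ^ α) hθ hx
  have h1 : HasDerivAt (fun s : ℝ => ((s ^ α : ℝ) : ℂ)) ((α * s ^ (α - 1) : ℝ) : ℂ) s :=
    (Real.hasDerivAt_rpow_const (Or.inl hs.ne')).ofReal_comp
  have h2 := ((h1.mul_const (Complex.exp (-(θ * Complex.I)))).const_add 1).inv h0
  have h3 := (Complex.ofRealCLM.hasDerivAt (x := s)).mul h2
  have h5 : s ^ α = s * s ^ (α - 1) := by
    rw [Real.rpow_sub_one hs.ne']; field_simp
  refine h3.congr_deriv ?_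
  simp only [Complex.ofRealCLM_apply, kern, kern']
  rw [(sub_eq_add_neg : ∀ a b : ℂ, a - b = a + -b)]
  congr 1
  · simp
  · generalize (1 + ((s ^ α : ℝ) : ℂ) * Complex.exp (-(θ * Complex.I))) = D
    rw [h5]
    push_cast
    ring

lemma rpow_cont (α : ℝ) (hα : 1 < α) : Continuous fun s : ℝ => s ^ α :=
  Real.continuous_rpow_const (by linarith)

lemma kern_cont (α θ : ℝ) (hα : 1 < α) (hθ : 0 < Real.cos (θ / 2)) :
    ContinuousOn (kern α θ) (Set.Ici 0) := by
  have := rpow_cont α hα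
  unfold kern
  refine ContinuousOn.inv₀ (by fun_prop) fun s hs => den_ne θ _ hθ (Real.rpow_nonneg hs α)

lemma kern'_cont (α θ : ℝ) (hα : 1 < α) (hθ : 0 < Real.cos (θ / 2)) :
    ContinuousOn (kern' α θ) (Set.Ici 0) := by
  have := rpow_cont α hα
  unfold kern'
  refine ContinuousOn.div (by fun_prop) (by fun_prop)
    fun s hs => pow_ne_zero _ (den_ne θ _ hθ (Real.rpow_nonneg hs α))

lemma one_add_integrable (α : ℝ) (hα : 1 < α) :
    IntegrableOn (fun s : ℝ => 1 / (1 + s ^ α)) (Set.Ioi 0) := by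
  refine Integrable.mono' (Fdom_integrable 0 α one_pos hα) ?_ ?_
  · refine ContinuousOn.aestronglyMeasurable ?_ measurableSet_Ioi
    refine ContinuousOn.div (by fun_prop) (by have := rpow_cont α hα; fun_prop) fun s hs => ?_
    have := Real.rpow_pos_of_pos hs α
    positivity
  · refine (ae_restrict_iff' measurableSet_Ioi).2 (Eventually.of_forall fun s hs => ?_)
    have := Real.rpow_pos_of_pos hs α
    rw [Real.norm_of_nonneg (by positivity)]
    exact Fdom_zero_ge α s hs

lemma kern_integrable (α θ : ℝ) (hα : 1 < α) (hθ : 0 < Real.cos (θ / 2)) :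
    IntegrableOn (kern α θ) (Set.Ioi 0) := by
  refine Integrable.mono' ((one_add_integrable α hα).const_mul (Real.cos (θ / 2))⁻¹)
    (((kern_cont α θ hα hθ).mono Set.Ioi_subset_Ici_self).aestronglyMeasurable measurableSet_Ioi) ?_
  refine (ae_restrict_iff' measurableSet_Ioi).2 (Eventually.of_forall fun s hs => ?_)
  exact kern_norm α θ s _ hθ le_rfl (le_of_lt hs)

lemma kern'_integrable (α θ : ℝ) (hα : 1 < α) (hθ : 0 < Real.cos (θ / 2)) :
    IntegrableOn (kern' α θ) (Set.Ioi 0) := by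
  refine Integrable.mono' ((one_add_integrable α hα).const_mul ((Real.cos (θ / 2))⁻¹ ^ 2))
    (((kern'_cont α θ hα hθ).mono Set.Ioi_subset_Ici_self).aestronglyMeasurable
      measurableSet_Ioi) ?_
  refine (ae_restrict_iff' measurableSet_Ioi).2 (Eventually.of_forall fun s hs => ?_)
  exact kern'_norm α θ s _ hθ le_rfl (le_of_lt hs)

lemma tendsto_aux (α : ℝ) (hα : 1 < α) (C : ℝ) :
    Tendsto (fun s : ℝ => C * s ^ (-(α - 1))) atTop (𝓝 0) := by
  have := (tendsto_rpow_neg_atTop (show 0 < α - 1 by linarith)).const_mul C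
  simpa using this

lemma kern_parts (α θ : ℝ) (hα : 1 < α) (hθ : 0 < Real.cos (θ / 2)) :
    ∫ s in Set.Ioi 0, kern α θ s = α * ∫ s in Set.Ioi 0, kern' α θ s := by
  have h1 := kern_integrable α θ hα hθ
  have h2 := kern'_integrable α θ hα hθ
  have h3 := integral_Ioi_of_hasDerivAt_of_tendsto
    (f := fun s : ℝ => (s : ℂ) * kern α θ s) (a := 0) (m := 0)
    (f' := fun s => kern α θ s - α * kern' α θ s)
    (((Complex.continuous_ofReal.continuousOn.mul (kern_cont α θ hα hθ)) 0 Set.self_mem_Ici))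
    (fun s hs => kern_hasDerivAt_s α θ s hθ hs) (h1.sub (h2.const_mul _)) ?_
  · rw [integral_sub h1 (h2.const_mul _), integral_const_mul] at h3
    simp only [Complex.ofReal_zero, zero_mul, sub_zero] at h3
    exact sub_eq_zero.1 h3
  · refine squeeze_zero_norm' ?_ (tendsto_aux α hα (Real.cos (θ / 2))⁻¹)
    filter_upwards [eventually_gt_atTop 0] with s hs
    have hx := Real.rpow_pos_of_pos hs α
    rw [norm_mul, Complex.norm_real, Real.norm_of_nonneg hs.le]
    calc s * ‖kern α θ s‖ ≤ s * ((Real.cos (θ / 2))⁻¹ * (1 / (1 + s ^ α))) := by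
          gcongr; exact kern_norm α θ s _ hθ le_rfl hs.le
      _ ≤ s * ((Real.cos (θ / 2))⁻¹ * (1 / s ^ α)) := by gcongr; linarith
      _ = (Real.cos (θ / 2))⁻¹ * s ^ (-(α - 1)) := by
        rw [Real.rpow_neg hs.le, Real.rpow_sub_one hs.ne']; field_simp

lemma J_hasDerivAt (α θ : ℝ) (hα : 1 < α) (hθ : 0 < Real.cos (θ / 2)) :
    HasDerivAt (fun θ => ∫ s in Set.Ioi 0, kern α θ s)
      (Complex.I / α * ∫ s in Set.Ioi 0, kern α θ s) θ := by
  set m := Real.cos (θ / 2) / 2 with hm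
  have hm0 : 0 < m := by positivity
  have hopen : {t : ℝ | m < Real.cos (t / 2)} ∈ 𝓝 θ := by
    refine IsOpen.mem_nhds (isOpen_lt continuous_const (by fun_prop)) ?_
    simp only [Set.mem_ofPred_eq]; linarith
  have key := hasDerivAt_integral_of_dominated_loc_of_deriv_le (μ := volume.restrict (Set.Ioi 0))
    (F := fun θ s => kern α θ s) (F' := fun θ s => Complex.I * kern' α θ s) (x₀ := θ)
    (bound := fun s => m⁻¹ ^ 2 * (1 / (1 + s ^ α))) hopen ?_ (kern_integrable α θ hα hθ) ?_ ?_ 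
    ((one_add_integrable α hα).const_mul _) ?_
  · refine key.2.congr_deriv ?_
    rw [integral_const_mul, kern_parts α θ hα hθ]
    have : (α : ℂ) ≠ 0 := by exact_mod_cast (by linarith : α ≠ 0)
    field_simp
  · filter_upwards [hopen] with t ht
    exact (kern_integrable α t hα (hm0.trans ht)).aestronglyMeasurable
  · exact ((kern'_integrable α θ hα hθ).const_mul _).aestronglyMeasurable
  · refine (ae_restrict_iff' measurableSet_Ioi).2 (Eventually.of_forall fun s hs t ht => ?_)
    rw [norm_mul, Complex.norm_I, one_mul]
    exact kern'_norm α t s m hm0 (le_of_lt ht) (le_of_lt hs)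
  · refine (ae_restrict_iff' measurableSet_Ioi).2 (Eventually.of_forall fun s hs t ht => ?_)
    exact kern_hasDerivAt_theta α t s (hm0.trans ht) (le_of_lt hs)

lemma J_eq (α θ : ℝ) (hα : 1 < α) (hθ : θ ∈ Set.Ioo (-Real.pi) Real.pi) :
    ∫ s in Set.Ioi 0, kern α θ s =
      Complex.exp (((θ / α : ℝ) : ℂ) * Complex.I) * ∫ s in Set.Ioi 0, kern α 0 s := by
  have hpi := Real.pi_pos
  have hα0 : (α : ℂ) ≠ 0 := by exact_mod_cast (by linarith : α ≠ 0)
  have hd : ∀ t ∈ Set.Ioo (-Real.pi) Real.pi, HasDerivAt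
      (fun t : ℝ => Complex.exp (-((t : ℂ) * (Complex.I / α))) * ∫ s in Set.Ioi 0, kern α t s) 0 t := by
    intro t ht
    have h1 : HasDerivAt (fun t : ℝ => -((t : ℂ) * (Complex.I / α))) (-(1 * (Complex.I / α))) t :=
      ((Complex.ofRealCLM.hasDerivAt (x := t)).mul_const _).neg
    refine (h1.cexp.mul (J_hasDerivAt α t hα (cos_half_pos t ht))).congr_deriv ?_
    ring
  have := IsOpen.is_const_of_deriv_eq_zero isOpen_Ioo isPreconnected_Ioo
    (fun t ht => (hd t ht).differentiableAt.differentiableWithinAt)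
    (fun t ht => (hd t ht).deriv) hθ (⟨by linarith, hpi⟩ : (0 : ℝ) ∈ Set.Ioo (-Real.pi) Real.pi)
  simp only [Complex.ofReal_zero, zero_mul, neg_zero, Complex.exp_zero, one_mul] at this
  rw [← this, ← mul_assoc, ← Complex.exp_add]
  have : (((θ / α : ℝ) : ℂ) * Complex.I) + -((θ : ℂ) * (Complex.I / α)) = 0 := by
    push_cast; ring
  rw [this, Complex.exp_zero, one_mul]

lemma kern_im (α θ s : ℝ) : (kern α θ s).im =
    Real.sin θ * (s ^ α / ((s ^ α) ^ 2 + 2 * Real.cos θ * s ^ α + 1)) := by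
  have h : (1 + ((s ^ α : ℝ) : ℂ) * Complex.exp (-(θ * Complex.I))) =
      ⟨1 + s ^ α * Real.cos θ, -(s ^ α * Real.sin θ)⟩ := by
    rw [← neg_mul, ← Complex.ofReal_neg]
    apply Complex.ext <;>
      simp only [Complex.add_re, Complex.add_im, Complex.one_re, Complex.one_im,
        Complex.re_ofReal_mul, Complex.im_ofReal_mul, Complex.exp_ofReal_mul_I_re,
        Complex.exp_ofReal_mul_I_im, Real.cos_neg, Real.sin_neg]
    ring
  rw [kern, h, Complex.inv_im, Complex.normSq_mk]
  have : (1 + s ^ α * Real.cos θ) * (1 + s ^ α * Real.cos θ) +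
      -(s ^ α * Real.sin θ) * -(s ^ α * Real.sin θ) =
      (s ^ α) ^ 2 + 2 * Real.cos θ * s ^ α + 1 := by
    linear_combination (s ^ α) ^ 2 * (Real.sin_sq_add_cos_sq θ)
  rw [this]
  simp only [neg_neg]
  ring

lemma Theta_integrable (α θ : ℝ) (hα : 1 < α) (hθ : 0 < θ) (hθπ : θ < Real.pi) :
    IntegrableOn (fun s : ℝ => Theta θ (s ^ α) 1) (Set.Ioi 0) := by
  refine Integrable.mono' ((Fdom_integrable 0 α one_pos hα).const_mul (2 * Real.pi)) ?_ ?_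
  · exact ((Theta_continuous θ hθ hθπ).comp (rpow_cont α hα)).aestronglyMeasurable
  · refine (ae_restrict_iff' measurableSet_Ioi).2 (Eventually.of_forall fun s hs => ?_)
    rw [Real.norm_of_nonneg (Theta_nonneg θ _ hθ hθπ)]
    exact Theta_Fdom θ α s hs

lemma Theta_integral_J (α θ : ℝ) (hα : 1 < α) (hθ : 0 < θ) (hθπ : θ < Real.pi) :
    ∫ s in Set.Ioi 0, Theta θ (s ^ α) 1 = α * (∫ s in Set.Ioi 0, kern α θ s).im := by
  have hc := cos_half_pos θ ⟨by linarith, hθπ⟩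
  have h1 := Theta_integrable α θ hα hθ hθπ
  have h2 := kern_integrable α θ hα hc
  have h2' : IntegrableOn (fun s => (kern α θ s).im) (Set.Ioi 0) := h2.im
  have him : (∫ s in Set.Ioi 0, kern α θ s).im = ∫ s in Set.Ioi 0, (kern α θ s).im :=
    (integral_im h2).symm
  rw [him]
  have hcont : Continuous (fun s : ℝ => s * Theta θ (s ^ α) 1) :=
    continuous_id.mul ((Theta_continuous θ hθ hθπ).comp (rpow_cont α hα))
  have h3 := integral_Ioi_of_hasDerivAt_of_tendsto
    (f := fun s : ℝ => s * Theta θ (s ^ α) 1) (a := 0) (m := 0)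
    (f' := fun s => Theta θ (s ^ α) 1 - α * (kern α θ s).im)
    hcont.continuousWithinAt ?_ (h1.sub (h2'.const_mul _)) ?_
  · rw [integral_sub h1 (h2'.const_mul _), integral_const_mul] at h3
    simp only [zero_mul, sub_zero] at h3
    exact sub_eq_zero.1 h3
  · intro s hs
    have hs' : (0 : ℝ) < s := hs
    have h4 := (Theta_hasDerivAt θ (s ^ α) hθ hθπ).comp s
      (Real.hasDerivAt_rpow_const (p := α) (Or.inl hs'.ne'))
    refine ((hasDerivAt_id s).mul h4).congr_deriv ?_
    rw [kern_im]
    have h5 : s ^ α = s * s ^ (α - 1) := by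
      rw [Real.rpow_sub_one hs'.ne']; field_simp
    have h6 := den_pos θ (s ^ α) hθ hθπ
    simp only [Function.comp, id]
    field_simp
    rw [h5]
    ring
  · refine squeeze_zero_norm' ?_ (tendsto_aux α hα (2 * Real.pi))
    filter_upwards [eventually_gt_atTop 0] with s hs
    have hx := Real.rpow_pos_of_pos hs α
    rw [norm_mul, Real.norm_of_nonneg hs.le, Real.norm_of_nonneg (Theta_nonneg θ _ hθ hθπ)]
    calc s * Theta θ (s ^ α) 1 ≤ s * (2 * Real.pi * (s ^ α)⁻¹) := by
          gcongr; exact Theta_le_inv θ _ hx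
      _ = 2 * Real.pi * s ^ (-(α - 1)) := by
        rw [Real.rpow_neg hs.le, Real.rpow_sub_one hs.ne']; field_simp

lemma Theta_integral_sin (α θ : ℝ) (hα : 1 < α) (hθ : 0 < θ) (hθπ : θ < Real.pi) :
    ∫ s in Set.Ioi 0, Theta θ (s ^ α) 1 =
      α * (Real.sin (θ / α) * (∫ s in Set.Ioi 0, kern α 0 s).re) := by
  rw [Theta_integral_J α θ hα hθ hθπ, J_eq α θ hα ⟨by linarith, hθπ⟩]
  have h0 : (∫ s in Set.Ioi 0, kern α 0 s).im = 0 := by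
    have : ∫ s in Set.Ioi 0, (kern α 0 s).im = (∫ s in Set.Ioi 0, kern α 0 s).im :=
      integral_im (kern_integrable α 0 hα (by simp))
    rw [← this]
    simp [kern_im]
  rw [Complex.mul_im, h0, Complex.exp_ofReal_mul_I_im]
  ring

lemma Theta_tendsto (x : ℝ) (hx1 : x ≠ 1) :
    Tendsto (fun θ => Theta θ x 1) (𝓝[<] Real.pi) (𝓝 (if x < 1 then Real.pi else 0)) := by
  have hc : Tendsto (fun θ : ℝ => (⟨x + Real.cos θ, Real.sin θ⟩ : ℂ)) (𝓝[<] Real.pi)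
      (𝓝 (⟨x - 1, 0⟩ : ℂ)) := by
    have h : Continuous (fun θ : ℝ => (⟨x + Real.cos θ, Real.sin θ⟩ : ℂ)) := by
      have : (fun θ : ℝ => (⟨x + Real.cos θ, Real.sin θ⟩ : ℂ)) =
        fun θ : ℝ => ((x + Real.cos θ : ℝ) : ℂ) + (Real.sin θ : ℝ) * Complex.I := by
        funext θ; exact Complex.mk_eq_add_mul_I _ _
      rw [this]; fun_prop
    have h2 := (h.tendsto Real.pi).mono_left (nhdsWithin_le_nhds (s := Set.Iio Real.pi))
    simpa [sub_eq_add_neg] using h2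
  simp only [Theta_one]
  split_ifs with h
  · have h1 := Complex.continuousWithinAt_arg_of_re_neg_of_im_zero (z := ⟨x - 1, 0⟩)
      (by simpa using h) rfl
    have h2 : Complex.arg ⟨x - 1, 0⟩ = Real.pi := by
      rw [Complex.arg_eq_pi_iff]; exact ⟨by simpa using h, rfl⟩
    rw [ContinuousWithinAt, h2] at h1
    refine h1.comp (tendsto_nhdsWithin_iff.2 ⟨hc, ?_⟩)
    have : Set.Ioo 0 Real.pi ∈ 𝓝[<] Real.pi := Ioo_mem_nhdsLT Real.pi_pos
    filter_upwards [this] with θ hθ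
    exact (Real.sin_pos_of_pos_of_lt_pi hθ.1 hθ.2).le
  · have h' : 1 < x := lt_of_le_of_ne (not_lt.1 h) (Ne.symm hx1)
    have h1 := Complex.continuousAt_arg (x := ⟨x - 1, 0⟩) (by
      rw [Complex.mem_slitPlane_iff]; left; simpa using h')
    have h2 : Complex.arg ⟨x - 1, 0⟩ = 0 := by
      rw [Complex.arg_eq_zero_iff]; exact ⟨by simpa using h'.le, rfl⟩
    rw [ContinuousAt, h2] at h1
    exact h1.comp hc

lemma const_eq (α : ℝ) (hα : 1 < α) :
    α * (Real.sin (Real.pi / α) * (∫ s in Set.Ioi 0, kern α 0 s).re) = Real.pi := by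
  have hev : Set.Ioo 0 Real.pi ∈ 𝓝[<] Real.pi := Ioo_mem_nhdsLT Real.pi_pos
  have h1 : Tendsto (fun θ => ∫ s in Set.Ioi 0, Theta θ (s ^ α) 1) (𝓝[<] Real.pi)
      (𝓝 (∫ s in Set.Ioi (0 : ℝ), if s ^ α < 1 then Real.pi else 0)) := by
    refine tendsto_integral_filter_of_dominated_convergence (fun s => 2 * Real.pi * Fdom 0 α s)
      ?_ ?_ ((Fdom_integrable 0 α one_pos hα).const_mul (2 * Real.pi)) ?_
    · filter_upwards [hev] with θ hθ
      exact (Theta_integrable α θ hα hθ.1 hθ.2).aestronglyMeasurable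
    · filter_upwards [hev] with θ hθ
      refine (ae_restrict_iff' measurableSet_Ioi).2 (Eventually.of_forall fun s hs => ?_)
      rw [Real.norm_of_nonneg (Theta_nonneg θ _ hθ.1 hθ.2)]
      exact Theta_Fdom θ α s hs
    · have hne : ∀ᵐ s : ℝ ∂(volume.restrict (Set.Ioi 0)), s ≠ 1 :=
        ae_restrict_of_ae (Measure.ae_ne volume 1)
      filter_upwards [hne, ae_restrict_mem measurableSet_Ioi] with s hs hs0
      refine Theta_tendsto _ fun h => hs ?_
      have h0 : (0 : ℝ) < s := hs0
      exact (Real.rpow_left_inj h0.le zero_le_one (by linarith : α ≠ 0)).1 (by rw [h, Real.one_rpow])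
  have h2 : ∫ s in Set.Ioi (0 : ℝ), (if s ^ α < 1 then Real.pi else 0) = Real.pi := by
    have : ∫ s in Set.Ioi (0 : ℝ), (if s ^ α < 1 then Real.pi else 0) =
        ∫ s in Set.Ioi (0 : ℝ), (Set.Iio 1).indicator (fun _ => Real.pi) s := by
      refine setIntegral_congr_fun measurableSet_Ioi fun s hs => ?_
      have h0 : (0 : ℝ) < s := hs
      simp only [Set.indicator, Set.mem_Iio]
      congr 1
      rw [Real.rpow_lt_one_iff_of_pos h0]
      simp only [eq_iff_iff]
      constructor
      · rintro (h | h)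
        · linarith [h.2]
        · exact h.1
      · intro h; right; exact ⟨h, by linarith⟩
    rw [this, setIntegral_indicator measurableSet_Iio, Set.Ioi_inter_Iio]
    simp
  rw [h2] at h1
  have h3 : Tendsto (fun θ => ∫ s in Set.Ioi 0, Theta θ (s ^ α) 1) (𝓝[<] Real.pi)
      (𝓝 (α * (Real.sin (Real.pi / α) * (∫ s in Set.Ioi 0, kern α 0 s).re))) := by
    have hc : Continuous fun θ : ℝ => 
        (α * (Real.sin (θ / α) * (∫ s in Set.Ioi 0, kern α 0 s).re)) := by fun_prop
    refine ((hc.tendsto Real.pi).mono_left (nhdsWithin_le_nhds (s := Set.Iio Real.pi))).congr' ?_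
    filter_upwards [hev] with θ hθ
    exact (Theta_integral_sin α θ hα hθ.1 hθ.2).symm
  exact tendsto_nhds_unique h3 h1

lemma Theta_integral (θ : ℝ) (hθ : 0 < θ) (hθπ : θ < Real.pi) :
    ∫ s in Set.Ioi 0, Theta θ (s ^ (1 + θ / Real.pi)) 1 = Real.pi := by
  have hpi := Real.pi_pos
  have hα : 1 < 1 + θ / Real.pi := by
    have : 0 < θ / Real.pi := by positivity
    linarith
  rw [Theta_integral_sin _ θ hα hθ hθπ]
  have : Real.sin (θ / (1 + θ / Real.pi)) = Real.sin (Real.pi / (1 + θ / Real.pi)) := by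
    rw [← Real.sin_pi_sub]
    congr 1
    have : 0 < Real.pi + θ := by linarith
    field_simp
    ring
  rw [this]
  exact const_eq _ hα

/-! ### Riemann sums -/

lemma sum_integral (f : ℕ → ℝ) (T : ℝ) (hT : 0 < T)
    (hInteg : IntegrableOn (fun s : ℝ => f ⌊T * s⌋₊) (Set.Ioi 0)) :
    HasSum f (T * ∫ s in Set.Ioi 0, f ⌊T * s⌋₊) := by
  have h1 : IntegrableOn (fun s : ℝ => f ⌊s⌋₊) (Set.Ici 0) := by
    rw [integrableOn_Ici_iff_integrableOn_Ioi]
    have := (integrableOn_Ioi_comp_mul_left_iff (fun s : ℝ => f ⌊s⌋₊) 0 hT).1 hInteg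
    simpa using this
  have hU : (⋃ n : ℕ, Set.Ico (n : ℝ) (n + 1)) = Set.Ici 0 := by
    ext x
    simp only [Set.mem_iUnion, Set.mem_Ico, Set.mem_Ici]
    constructor
    · rintro ⟨n, h, _⟩
      exact (Nat.cast_nonneg n).trans h
    · intro hx
      exact ⟨⌊x⌋₊, Nat.floor_le hx, Nat.lt_floor_add_one x⟩
  have h2 := hasSum_integral_iUnion (μ := volume) (f := fun s : ℝ => f ⌊s⌋₊)
    (s := fun n : ℕ => Set.Ico (n : ℝ) (n + 1)) (fun n => measurableSet_Ico)
    (by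
      intro m n hmn
      refine Set.disjoint_left.2 fun x hx hy => hmn ?_
      have e1 := (Nat.floor_eq_iff ((Nat.cast_nonneg m).trans hx.1)).2 hx
      have e2 := (Nat.floor_eq_iff ((Nat.cast_nonneg n).trans hy.1)).2 hy
      exact e1.symm.trans e2) (by rw [hU]; exact h1)
  rw [hU, integral_Ici_eq_integral_Ioi] at h2
  have h3 : ∀ n : ℕ, ∫ s in Set.Ico (n : ℝ) (n + 1), f ⌊s⌋₊ = f n := by
    intro n
    have : ∫ s in Set.Ico (n : ℝ) (n + 1), f ⌊s⌋₊ = ∫ s in Set.Ico (n : ℝ) (n + 1), f n := by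
      refine setIntegral_congr_fun measurableSet_Ico fun x hx => ?_
      have e1 := (Nat.floor_eq_iff ((Nat.cast_nonneg n).trans hx.1)).2 hx
      simp only [e1]
    rw [this]
    simp
  simp only [h3] at h2
  have h4 := integral_comp_mul_left_Ioi (fun s : ℝ => f ⌊s⌋₊) 0 hT
  simp only [mul_zero] at h4
  rw [h4, smul_eq_mul, ← mul_assoc, mul_inv_cancel₀ hT.ne', one_mul]
  exact h2

lemma term_bound (α a ε C c1 c2 : ℝ) (hα : 1 < α) (ha : 0 ≤ a) (hε : 0 ≤ ε) (hC : 0 ≤ C)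
    (hc1 : 0 < c1) (hc2 : 0 < c2)
    (g : ℝ → ℝ) (hb1 : ∀ x, 0 < x → |g x| ≤ C * x ^ a) (hb2 : ∀ x, 0 < x → |g x| ≤ C * x⁻¹)
    (x u : ℝ) (hu : 0 < u) (h1 : c1 * u ^ α ≤ x) (h2 : x ≤ c2 * u ^ α) :
    |g x * u ^ (-ε)| ≤ C * (c2 ^ a + c1⁻¹) * Fdom (max 0 (ε - α * a)) α u := by
  have hua := Real.rpow_pos_of_pos hu α
  have hue := Real.rpow_pos_of_pos hu (-ε)
  have hx : 0 < x := lt_of_lt_of_le (by positivity) h1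
  have hc2a := Real.rpow_pos_of_pos hc2 a
  have hc1i : 0 < c1⁻¹ := by positivity
  rw [abs_mul, abs_of_pos hue]
  unfold Fdom
  split_ifs with h
  · calc |g x| * u ^ (-ε) ≤ (C * x ^ a) * u ^ (-ε) := by gcongr; exact hb1 x hx
      _ ≤ (C * (c2 * u ^ α) ^ a) * u ^ (-ε) := by gcongr
      _ = C * c2 ^ a * u ^ (α * a - ε) := by
        rw [Real.mul_rpow hc2.le hua.le, ← Real.rpow_mul hu.le, sub_eq_add_neg,
          Real.rpow_add hu]; ring
      _ ≤ C * c2 ^ a * u ^ (-(max 0 (ε - α * a))) := by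
        have : u ^ (α * a - ε) ≤ u ^ (-(max 0 (ε - α * a))) :=
          Real.rpow_le_rpow_of_exponent_ge hu h (by linarith [le_max_right 0 (ε - α * a)])
        gcongr
      _ ≤ _ := by
        have := Real.rpow_pos_of_pos hu (-(max 0 (ε - α * a)))
        gcongr; linarith
  · push Not at h
    calc |g x| * u ^ (-ε) ≤ (C * x⁻¹) * 1 := by
          gcongr
          · exact hb2 x hx
          · exact Real.rpow_le_one_of_one_le_of_nonpos h.le (by linarith)
      _ ≤ C * (c1 * u ^ α)⁻¹ * 1 := by gcongr
      _ = C * c1⁻¹ * u ^ (-α) := by rw [Real.rpow_neg hu.le, mul_inv]; ring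
      _ ≤ _ := by
        have := Real.rpow_pos_of_pos hu (-α)
        gcongr; linarith

lemma riemann (α a ε C c1 c2 : ℝ) (hα : 1 < α) (ha : 0 ≤ a) (hε : 0 ≤ ε) (hC : 0 ≤ C)
    (hεa : ε < α * a + 1) (hc1 : 0 < c1) (hc2 : 0 < c2)
    (g : ℝ → ℝ) (hg : ContinuousOn g (Set.Ioi 0))
    (hb1 : ∀ x, 0 < x → |g x| ≤ C * x ^ a) (hb2 : ∀ x, 0 < x → |g x| ≤ C * x⁻¹)
    (X : ℕ → ℝ) (hX1 : ∀ k : ℕ, 1 ≤ k → c1 * (k : ℝ) ^ α ≤ X k)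
    (hX2 : ∀ k : ℕ, 1 ≤ k → X k ≤ c2 * (k : ℝ) ^ α)
    (hlim : Tendsto (fun k : ℕ => X k / (k : ℝ) ^ α) atTop (𝓝 1)) :
    (∀ T : ℝ, 0 < T →
      Summable fun k : ℕ => g (X (k + 1) / T ^ α) * (((k : ℝ) + 1) / T) ^ (-ε)) ∧
    Tendsto (fun T : ℝ => T⁻¹ *
      ∑' k : ℕ, g (X (k + 1) / T ^ α) * (((k : ℝ) + 1) / T) ^ (-ε)) atTop
      (𝓝 (∫ s in Set.Ioi 0, g (s ^ α) * s ^ (-ε))) := by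
  set β := max 0 (ε - α * a) with hβ
  have hβ0 : 0 ≤ β := le_max_left _ _
  have hβ1 : β < 1 := max_lt one_pos (by linarith)
  set K := C * (c2 ^ a + c1⁻¹) with hK
  have hK0 : 0 ≤ K := by
    have := Real.rpow_pos_of_pos hc2 a
    positivity
  set f : ℝ → ℕ → ℝ := fun T k => g (X (k + 1) / T ^ α) * (((k : ℝ) + 1) / T) ^ (-ε) with hf
  have hFint : IntegrableOn (fun s => K * Fdom β α s) (Set.Ioi 0) :=
    (Fdom_integrable β α hβ1 hα).const_mul K
  have hbound : ∀ T : ℝ, 0 < T → ∀ s : ℝ, 0 < s → |f T ⌊T * s⌋₊| ≤ K * Fdom β α s := by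
    intro T hT s hs
    set k := ⌊T * s⌋₊
    have hk : T * s < (k : ℝ) + 1 := Nat.lt_floor_add_one _
    have hsu : s ≤ ((k : ℝ) + 1) / T := by
      rw [le_div_iff₀ hT]; linarith
    have hu : 0 < ((k : ℝ) + 1) / T := by positivity
    have hTa := Real.rpow_pos_of_pos hT α
    have e : (((k : ℝ) + 1) / T) ^ α = ((k : ℝ) + 1) ^ α / T ^ α :=
      Real.div_rpow (by positivity) hT.le α
    have h1 := hX1 (k + 1) (by omega)
    have h2 := hX2 (k + 1) (by omega)
    push_cast at h1 h2
    refine (term_bound α a ε C c1 c2 hα ha hε hC hc1 hc2 g hb1 hb2 _ _ hu ?_ ?_).trans ?_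
    · rw [e, ← mul_div_assoc]; gcongr
    · rw [e, ← mul_div_assoc]; gcongr
    · exact mul_le_mul_of_nonneg_left (Fdom_antitone β α s _ hβ0 hα hs hsu) hK0
  have hmeas : ∀ T : ℝ, AEStronglyMeasurable (fun s : ℝ => f T ⌊T * s⌋₊)
      (volume.restrict (Set.Ioi 0)) := by
    intro T
    have : Measurable (fun s : ℝ => f T ⌊T * s⌋₊) :=
      (measurable_from_nat (f := f T)).comp (Nat.measurable_floor.comp (measurable_const_mul T))
    exact this.aestronglyMeasurable
  have hInteg : ∀ T : ℝ, 0 < T → IntegrableOn (fun s : ℝ => f T ⌊T * s⌋₊) (Set.Ioi 0) := by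
    intro T hT
    refine Integrable.mono' hFint (hmeas T) ?_
    refine (ae_restrict_iff' measurableSet_Ioi).2 (Eventually.of_forall fun s hs => ?_)
    exact hbound T hT s hs
  refine ⟨fun T hT => (sum_integral (f T) T hT (hInteg T hT)).summable, ?_⟩
  have hDCT : Tendsto (fun T : ℝ => ∫ s in Set.Ioi 0, f T ⌊T * s⌋₊) atTop
      (𝓝 (∫ s in Set.Ioi 0, g (s ^ α) * s ^ (-ε))) := by
    refine tendsto_integral_filter_of_dominated_convergence (fun s => K * Fdom β α s)
      (Eventually.of_forall hmeas) ?_ hFint ?_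
    · filter_upwards [eventually_gt_atTop 0] with T hT
      refine (ae_restrict_iff' measurableSet_Ioi).2 (Eventually.of_forall fun s hs => ?_)
      exact hbound T hT s hs
    · refine (ae_restrict_iff' measurableSet_Ioi).2 (Eventually.of_forall fun s hs => ?_)
      have hs0 : (0 : ℝ) < s := hs
      have hu : Tendsto (fun T : ℝ => ((⌊T * s⌋₊ : ℝ) + 1) / T) atTop (𝓝 s) := by
        have e1 := tendsto_nat_floor_mul_div_atTop (R := ℝ) hs0.le
        have e2 := e1.add tendsto_inv_atTop_zero
        rw [add_zero] at e2
        refine e2.congr fun T => ?_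
        rw [mul_comm s T]; ring
      have hk : Tendsto (fun T : ℝ => ⌊T * s⌋₊ + 1) atTop atTop :=
        (tendsto_add_atTop_nat 1).comp
          (tendsto_nat_floor_atTop.comp (tendsto_id.atTop_mul_const hs0))
      have hx : Tendsto (fun T : ℝ => X (⌊T * s⌋₊ + 1) / T ^ α) atTop (𝓝 (s ^ α)) := by
        have e1 := (hlim.comp hk).mul (hu.rpow_const (p := α) (Or.inl hs0.ne'))
        rw [one_mul] at e1
        refine e1.congr' ?_
        filter_upwards [eventually_gt_atTop 0] with T hT
        have p1 : 0 < (⌊T * s⌋₊ : ℝ) + 1 := by positivity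
        have p2 := Real.rpow_pos_of_pos p1 α
        have p3 := Real.rpow_pos_of_pos hT α
        simp only [Function.comp]
        rw [Real.div_rpow p1.le hT.le]
        push_cast
        field_simp
      have hsa : s ^ α ∈ Set.Ioi (0 : ℝ) := Real.rpow_pos_of_pos hs0 α
      have hgx := (hg.continuousAt (isOpen_Ioi.mem_nhds hsa)).tendsto.comp hx
      exact hgx.mul (hu.rpow_const (p := -ε) (Or.inl hs0.ne'))
  refine hDCT.congr' ?_
  filter_upwards [eventually_gt_atTop 0] with T hT
  rw [(sum_integral (f T) T hT (hInteg T hT)).tsum_eq, ← mul_assoc, inv_mul_cancel₀ hT.ne', one_mul]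

/-! ### The kernel `Pker` -/

lemma Pker_one (θ x : ℝ) : Pker θ x 1 = x / (x ^ 2 + 2 * Real.cos θ * x + 1) := by
  simp [Pker]

lemma Pker_scale (θ x y : ℝ) (hy : 0 < y) : Pker θ x y = Pker θ (x / y) 1 := by
  rw [Pker_one, Pker]
  have e : (x / y) ^ 2 + 2 * Real.cos θ * (x / y) + 1 =
      (x ^ 2 + 2 * Real.cos θ * x * y + y ^ 2) / y ^ 2 := by
    field_simp
  rw [e, div_div_div_eq]
  rw [show x * y ^ 2 = y * (x * y) by ring, mul_div_mul_left _ _ hy.ne']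

lemma cos_pos' (θ : ℝ) (hθ : 0 < θ) (hθπ : θ < Real.pi) : 0 < 1 + Real.cos θ := by
  have := Real.sin_pos_of_pos_of_lt_pi hθ hθπ
  nlinarith [Real.sin_sq_add_cos_sq θ, Real.neg_one_le_cos θ, Real.cos_le_one θ]

lemma Pker_pos (θ x : ℝ) (hθ : 0 < θ) (hθπ : θ < Real.pi) (hx : 0 < x) : 0 < Pker θ x 1 := by
  rw [Pker_one]
  exact div_pos hx (den_pos θ x hθ hθπ)

lemma den_lower (θ x : ℝ) :
    (1 + Real.cos θ) / 2 * (1 + x) ^ 2 ≤ x ^ 2 + 2 * Real.cos θ * x + 1 := by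
  nlinarith [mul_nonneg (sub_nonneg.2 (Real.cos_le_one θ)) (sq_nonneg (1 - x))]

lemma Pker_le (θ x : ℝ) (hθ : 0 < θ) (hθπ : θ < Real.pi) (hx : 0 < x) :
    |Pker θ x 1| ≤ 2 / (1 + Real.cos θ) * x ^ (1 : ℝ) := by
  have hm := cos_pos' θ hθ hθπ
  rw [abs_of_pos (Pker_pos θ x hθ hθπ hx), Pker_one, Real.rpow_one,
    div_le_iff₀ (den_pos θ x hθ hθπ)]
  calc x = 2 / (1 + Real.cos θ) * x * ((1 + Real.cos θ) / 2 * 1) := by field_simp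
    _ ≤ _ := by
      gcongr
      refine le_trans ?_ (den_lower θ x)
      gcongr
      nlinarith

lemma Pker_le' (θ x : ℝ) (hθ : 0 < θ) (hθπ : θ < Real.pi) (hx : 0 < x) :
    |Pker θ x 1| ≤ 2 / (1 + Real.cos θ) * x⁻¹ := by
  have hm := cos_pos' θ hθ hθπ
  rw [abs_of_pos (Pker_pos θ x hθ hθπ hx), Pker_one,
    div_le_iff₀ (den_pos θ x hθ hθπ)]
  calc x = 2 / (1 + Real.cos θ) * x⁻¹ * ((1 + Real.cos θ) / 2 * x ^ 2) := by field_simp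
    _ ≤ _ := by
      gcongr
      refine le_trans ?_ (den_lower θ x)
      gcongr
      linarith

lemma Pker_cont (θ : ℝ) (hθ : 0 < θ) (hθπ : θ < Real.pi) :
    Continuous (fun x => Pker θ x 1) := by
  simp only [Pker_one]
  exact Continuous.div (by fun_prop) (by fun_prop) fun x => (den_pos θ x hθ hθπ).ne'

lemma Sfun_eq (θ ε : ℝ) : Sfun θ ε =
    ∫ s in Set.Ioi (0 : ℝ), Pker θ (s ^ (1 + θ / Real.pi)) 1 * s ^ (-ε) := by
  unfold Sfun
  refine setIntegral_congr_fun measurableSet_Ioi fun s hs => ?_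
  have h0 : (0 : ℝ) < s := hs
  have hx := Real.rpow_pos_of_pos h0 (1 + θ / Real.pi)
  simp only [Pker_one]
  rw [Real.rpow_neg h0.le (1 + θ / Real.pi)]
  generalize s ^ (1 + θ / Real.pi) = x at *
  have e : x + 2 * Real.cos θ + x⁻¹ = (x ^ 2 + 2 * Real.cos θ * x + 1) / x := by
    field_simp
  rw [e, div_div_eq_mul_div]
  ring

lemma Sfun_zero_pos (θ : ℝ) (hθ : 0 < θ) (hθπ : θ < Real.pi) : 0 < Sfun θ 0 := by
  have hpi := Real.pi_pos
  have hα : 1 < 1 + θ / Real.pi := by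
    have : 0 < θ / Real.pi := by positivity
    linarith
  rw [Sfun_eq]
  simp only [neg_zero, Real.rpow_zero, mul_one]
  have hm := cos_pos' θ hθ hθπ
  have hInteg : IntegrableOn (fun s : ℝ => Pker θ (s ^ (1 + θ / Real.pi)) 1) (Set.Ioi 0) := by
    have h1 := (kern_integrable (1 + θ / Real.pi) θ hα (cos_half_pos θ ⟨by linarith, hθπ⟩)).im
    have h2 := h1.const_mul (Real.sin θ)⁻¹
    refine h2.congr (Eventually.of_forall fun s => ?_)
    have := Real.sin_pos_of_pos_of_lt_pi hθ hθπ
    simp only [RCLike.im_eq_complex_im, kern_im, Pker_one]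
    rw [inv_mul_cancel_left₀ this.ne']
  rw [setIntegral_pos_iff_support_of_nonneg_ae ?_ hInteg]
  · refine lt_of_lt_of_le ?_ (measure_mono (s := Set.Ioi (0 : ℝ)) fun s hs => ⟨?_, hs⟩)
    · simp
    · exact (Pker_pos θ _ hθ hθπ (Real.rpow_pos_of_pos hs _)).ne'
  · refine (ae_restrict_iff' measurableSet_Ioi).2 (Eventually.of_forall fun s hs => ?_)
    exact (Pker_pos θ _ hθ hθπ (Real.rpow_pos_of_pos hs _)).le

lemma diverge (θ α ε c1 : ℝ) (hθ : 0 < θ) (hθπ : θ < Real.pi) (hα : 1 < α) (hε : α + 1 ≤ ε)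
    (hc1 : 0 < c1) (X : ℕ → ℝ) (hX1 : ∀ k : ℕ, 1 ≤ k → c1 * (k : ℝ) ^ α ≤ X k)
    (hsum : ∀ T : ℝ, 0 < T → Summable fun k : ℕ => Pker θ (X (k + 1) / T ^ α) 1) :
    Tendsto (fun T : ℝ => T⁻¹ *
      ∑' k : ℕ, Pker θ (X (k + 1) / T ^ α) 1 * (((k : ℝ) + 1) / T) ^ (-ε)) atTop atTop := by
  have hXpos : ∀ k : ℕ, 0 < X (k + 1) := fun k =>
    lt_of_lt_of_le (by positivity) (hX1 (k + 1) (by omega))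
  rw [tendsto_atTop]
  intro M
  obtain ⟨N, hN⟩ := ((Real.tendsto_sum_range_one_div_nat_succ_atTop.const_mul_atTop
    hc1).eventually_gt_atTop M).exists
  have hterm : ∀ x : ℝ, Tendsto (fun T : ℝ => T ^ α * Pker θ (x / T ^ α) 1) atTop (𝓝 x) := by
    intro x
    have hT : Tendsto (fun T : ℝ => T ^ α) atTop atTop := tendsto_rpow_atTop (by linarith)
    have h0 : Tendsto (fun T : ℝ => x / T ^ α) atTop (𝓝 0) := tendsto_const_nhds.div_atTop hT
    have h1 : Tendsto (fun T : ℝ => x / ((x / T ^ α) ^ 2 + 2 * Real.cos θ * (x / T ^ α) + 1))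
        atTop (𝓝 (x / (0 ^ 2 + 2 * Real.cos θ * 0 + 1))) :=
      tendsto_const_nhds.div (((h0.pow 2).add (h0.const_mul _)).add_const 1) (by norm_num)
    have e : x / (0 ^ 2 + 2 * Real.cos θ * 0 + 1) = x := by simp
    rw [e] at h1
    refine h1.congr' ?_
    filter_upwards [eventually_gt_atTop 0] with T hT
    have := Real.rpow_pos_of_pos hT α
    rw [Pker_one]
    generalize (x / T ^ α) ^ 2 + 2 * Real.cos θ * (x / T ^ α) + 1 = D
    field_simp
  have hB : Tendsto (fun T : ℝ => ∑ k ∈ Finset.range N,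
      T ^ α * Pker θ (X (k + 1) / T ^ α) 1 * ((k : ℝ) + 1) ^ (-(α + 1))) atTop
      (𝓝 (∑ k ∈ Finset.range N, X (k + 1) * ((k : ℝ) + 1) ^ (-(α + 1)))) :=
    tendsto_finsetSum _ fun k _ => (hterm (X (k + 1))).mul_const _
  have hlim : M < ∑ k ∈ Finset.range N, X (k + 1) * ((k : ℝ) + 1) ^ (-(α + 1)) := by
    refine hN.trans_le ?_
    rw [Finset.mul_sum]
    refine Finset.sum_le_sum fun k _ => ?_
    have hk : (0 : ℝ) < (k : ℝ) + 1 := by positivity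
    have h1 := hX1 (k + 1) (by omega)
    push_cast at h1
    calc c1 * (1 / ((k : ℝ) + 1)) = c1 * ((k : ℝ) + 1) ^ α * ((k : ℝ) + 1) ^ (-(α + 1)) := by
          rw [mul_assoc, ← Real.rpow_add hk, show α + -(α + 1) = -1 by ring, Real.rpow_neg_one,
            one_div]
      _ ≤ _ := by gcongr
  filter_upwards [hB.eventually_const_lt hlim, eventually_ge_atTop (N : ℝ), eventually_gt_atTop 0]
    with T hT1 hTN hT0
  refine hT1.le.trans ?_
  have hTa := Real.rpow_pos_of_pos hT0 α
  have hp : ∀ k : ℕ, 0 < Pker θ (X (k + 1) / T ^ α) 1 := fun k =>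
    Pker_pos θ _ hθ hθπ (div_pos (hXpos k) hTa)
  have hsm : Summable fun k : ℕ =>
      Pker θ (X (k + 1) / T ^ α) 1 * (((k : ℝ) + 1) / T) ^ (-ε) := by
    refine Summable.of_nonneg_of_le (fun k => ?_) (fun k => ?_)
      ((hsum T hT0).mul_right (T⁻¹ ^ (-ε)))
    · have := hp k; positivity
    · have := hp k
      have h1 : T⁻¹ ≤ ((k : ℝ) + 1) / T := by
        rw [inv_eq_one_div]; gcongr; linarith [(Nat.cast_nonneg k : (0 : ℝ) ≤ k)]
      have h2 := Real.rpow_le_rpow_of_nonpos (inv_pos.2 hT0) h1 (show -ε ≤ 0 by linarith)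
      gcongr
  calc _ ≤ T⁻¹ * ∑ k ∈ Finset.range N,
        Pker θ (X (k + 1) / T ^ α) 1 * (((k : ℝ) + 1) / T) ^ (-ε) := by
        rw [Finset.mul_sum]
        refine Finset.sum_le_sum fun k hk => ?_
        have hk0 : (0 : ℝ) < (k : ℝ) + 1 := by positivity
        have hkN : (k : ℝ) + 1 ≤ N := by exact_mod_cast Finset.mem_range.1 hk
        have hu : (0 : ℝ) < ((k : ℝ) + 1) / T := by positivity
        have hu1 : ((k : ℝ) + 1) / T ≤ 1 := by rw [div_le_one hT0]; linarith
        have h2 : (((k : ℝ) + 1) / T) ^ (-(α + 1)) ≤ (((k : ℝ) + 1) / T) ^ (-ε) :=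
          Real.rpow_le_rpow_of_exponent_ge hu hu1 (by linarith)
        have h3 : (((k : ℝ) + 1) / T) ^ (-(α + 1)) =
            T * T ^ α * ((k : ℝ) + 1) ^ (-(α + 1)) := by
          rw [Real.div_rpow hk0.le hT0.le, Real.rpow_neg hT0.le, Real.rpow_add_one hT0.ne',
            div_inv_eq_mul]
          ring
        have := hp k
        calc _ = T⁻¹ * (Pker θ (X (k + 1) / T ^ α) 1 * (((k : ℝ) + 1) / T) ^ (-(α + 1))) := by
              rw [h3]; field_simp
          _ ≤ _ := by gcongr
    _ ≤ _ := by
        gcongr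
        refine hsm.sum_le_tsum _ fun k _ => ?_
        have := hp k
        positivity

theorem stmt_16 (θ : ℝ) (hθ : 0 < θ) (hθπ : θ < Real.pi)
    (Q : ℕ → ℝ) (hQpos : ∀ k, 1 ≤ k → 0 < Q k)
    (hQ : (fun k : ℕ => Q k - (k : ℝ)) =O[atTop] fun _ : ℕ => (1 : ℝ))
    (X Y : ℕ → ℝ) (hXpos : ∀ k, 1 ≤ k → 0 < X k) (hYpos : ∀ j, 1 ≤ j → 0 < Y j)
    (hX : (fun k : ℕ => Real.log (X k) - (1 + θ / Real.pi) * Real.log k)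
      =o[atTop] fun _ : ℕ => (1 : ℝ))
    (hfix : ∀ j, 1 ≤ j → phi θ X Y j = ENNReal.ofReal (Q j)) :
    (∀ j, 1 ≤ j → Summable fun k : ℕ => Pker θ (X (k + 1)) (Y j)) ∧
    ∀ ε : ℝ, 0 ≤ ε →
      ((ε < 1 + θ / Real.pi + 1 →
        Tendsto (fun j : ℕ => (j : ℝ) ^ ε *
            ((∑' k : ℕ, Pker θ (X (k + 1)) (Y j) * ((k : ℝ) + 1) ^ (-ε)) /
              ∑' k : ℕ, Pker θ (X (k + 1)) (Y j)))
          atTop (nhds (Sfun θ ε / Sfun θ 0))) ∧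
      (1 + θ / Real.pi + 1 ≤ ε →
        Tendsto (fun j : ℕ => (j : ℝ) ^ ε *
            ((∑' k : ℕ, Pker θ (X (k + 1)) (Y j) * ((k : ℝ) + 1) ^ (-ε)) /
              ∑' k : ℕ, Pker θ (X (k + 1)) (Y j)))
          atTop atTop)) := by
  set α := 1 + θ / Real.pi with hαdef
  have hpi := Real.pi_pos
  have hα : 1 < α := by
    have : 0 < θ / Real.pi := by positivity
    linarith
  have hα0 : α ≠ 0 := by linarith
  have hm := cos_pos' θ hθ hθπ
  -- asymptotics of `X`
  have hlim : Tendsto (fun k : ℕ => X k / (k : ℝ) ^ α) atTop (𝓝 1) := by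
    have h1 := (isLittleO_one_iff ℝ).1 hX
    have h2 := (Real.continuous_exp.tendsto 0).comp h1
    rw [Real.exp_zero] at h2
    refine h2.congr' ?_
    filter_upwards [eventually_ge_atTop 1] with k hk
    have hk0 : (0 : ℝ) < k := by exact_mod_cast hk
    simp only [Function.comp]
    rw [Real.exp_sub, Real.exp_log (hXpos k hk), Real.rpow_def_of_pos hk0, mul_comm α]
  obtain ⟨c2, hc2, hX2⟩ : ∃ c2 : ℝ, 0 < c2 ∧ ∀ k : ℕ, 1 ≤ k → X k ≤ c2 * (k : ℝ) ^ α := by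
    obtain ⟨B, hB⟩ := hlim.bddAbove_range
    refine ⟨max B 1, by positivity, fun k hk => ?_⟩
    have hk0 : (0 : ℝ) < k := by exact_mod_cast hk
    rw [← div_le_iff₀ (Real.rpow_pos_of_pos hk0 α)]
    exact (hB ⟨k, rfl⟩).trans (le_max_left _ _)
  obtain ⟨c1, hc1, hX1⟩ : ∃ c1 : ℝ, 0 < c1 ∧ ∀ k : ℕ, 1 ≤ k → c1 * (k : ℝ) ^ α ≤ X k := by
    obtain ⟨B, hB⟩ := (hlim.inv₀ one_ne_zero).bddAbove_range
    refine ⟨(max B 1)⁻¹, by positivity, fun k hk => ?_⟩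
    have hk0 : (0 : ℝ) < k := by exact_mod_cast hk
    rw [← le_div_iff₀ (Real.rpow_pos_of_pos hk0 α)]
    have h1 : (X k / (k : ℝ) ^ α)⁻¹ ≤ max B 1 := (hB ⟨k, rfl⟩).trans (le_max_left _ _)
    exact inv_le_of_inv_le₀ (div_pos (hXpos k hk) (Real.rpow_pos_of_pos hk0 α)) h1
  -- the scale `T j`
  set T : ℕ → ℝ := fun j => Y j ^ α⁻¹ with hT
  have hTpos : ∀ j, 1 ≤ j → 0 < T j := fun j hj => Real.rpow_pos_of_pos (hYpos j hj) _
  have hTY : ∀ j, 1 ≤ j → T j ^ α = Y j := fun j hj =>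
    Real.rpow_inv_rpow (hYpos j hj).le hα0
  -- Riemann sums
  have hRT := riemann α 0 0 (2 * Real.pi) c1 c2 hα le_rfl le_rfl (by positivity) (by simp)
    hc1 hc2 (fun x => Theta θ x 1) (Theta_continuous θ hθ hθπ).continuousOn
    (fun x hx => by
      rw [abs_of_nonneg (Theta_nonneg θ x hθ hθπ), Real.rpow_zero]
      linarith [Theta_le_pi θ x])
    (fun x hx => by
      rw [abs_of_nonneg (Theta_nonneg θ x hθ hθπ)]; exact Theta_le_inv θ x hx) X hX1 hX2 hlim
  simp only [neg_zero, Real.rpow_zero, mul_one] at hRT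
  rw [Theta_integral θ hθ hθπ] at hRT
  have hRP : ∀ ε : ℝ, 0 ≤ ε → ε < α + 1 → _ := fun ε hε0 hε1 =>
    riemann α 1 ε (2 / (1 + Real.cos θ)) c1 c2 hα zero_le_one hε0 (by positivity)
      (by linarith) hc1 hc2 (fun x => Pker θ x 1) (Pker_cont θ hθ hθπ).continuousOn
      (fun x hx => Pker_le θ x hθ hθπ hx) (fun x hx => Pker_le' θ x hθ hθπ hx) X hX1 hX2 hlim
  have hRP0 := hRP 0 le_rfl (by linarith)
  rw [← Sfun_eq] at hRP0
  simp only [neg_zero, Real.rpow_zero, mul_one] at hRP0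
  have hPeq : ∀ j, 1 ≤ j → ∀ k, Pker θ (X (k + 1)) (Y j) = Pker θ (X (k + 1) / T j ^ α) 1 := by
    intro j hj k
    rw [hTY j hj, Pker_scale θ _ _ (hYpos j hj)]
  have hTeq : ∀ j, 1 ≤ j → ∀ k, Theta θ (X (k + 1)) (Y j) = Theta θ (X (k + 1) / T j ^ α) 1 := by
    intro j hj k
    rw [hTY j hj, Theta_scale θ _ _ (hYpos j hj)]
  -- the fixed point equation
  have hQeq : ∀ j, 1 ≤ j → ∑' k : ℕ, Theta θ (X (k + 1) / T j ^ α) 1 = Real.pi * Q j := by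
    intro j hj
    have h1 := hfix j hj
    unfold phi at h1
    simp only [hTeq j hj] at h1
    rw [← ENNReal.ofReal_tsum_of_nonneg (fun k => Theta_nonneg θ _ hθ hθπ)
      (hRT.1 (T j) (hTpos j hj)), ← ENNReal.ofReal_mul (by positivity)] at h1
    have h2 : 0 ≤ ∑' k : ℕ, Theta θ (X (k + 1) / T j ^ α) 1 :=
      tsum_nonneg fun k => Theta_nonneg θ _ hθ hθπ
    rw [ENNReal.ofReal_eq_ofReal_iff (by positivity) (hQpos j hj).le] at h1
    rw [← h1]
    field_simp
  -- `Q j / j → 1`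
  have hQj : Tendsto (fun j : ℕ => Q j / j) atTop (𝓝 1) := by
    have h1 : Tendsto (fun j : ℕ => (Q j - j) / (j : ℝ)) atTop (𝓝 0) := by
      have h2 : (fun _ : ℕ => (1 : ℝ)) =o[atTop] fun j : ℕ => (j : ℝ) := by
        rw [isLittleO_const_left]; right
        exact tendsto_norm_atTop_atTop.comp tendsto_natCast_atTop_atTop
      exact (hQ.trans_isLittleO h2).tendsto_div_nhds_zero
    have h3 := h1.add_const 1
    rw [zero_add] at h3
    refine h3.congr' ?_
    filter_upwards [eventually_ge_atTop 1] with j hj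
    have hj0 : (0 : ℝ) < j := by exact_mod_cast hj
    field_simp
    ring
  have hQtop : Tendsto Q atTop atTop := by
    have h1 := hQj.pos_mul_atTop one_pos (tendsto_natCast_atTop_atTop (R := ℝ))
    refine h1.congr' ?_
    filter_upwards [eventually_ge_atTop 1] with j hj
    have hj0 : (0 : ℝ) < j := by exact_mod_cast hj
    field_simp
  -- `Y j → ∞`
  have hXinv : Summable fun k : ℕ => (X (k + 1))⁻¹ := by
    have h1 : Summable fun k : ℕ => (((k + 1 : ℕ) : ℝ) ^ α)⁻¹ :=
      (summable_nat_add_iff (f := fun n : ℕ => ((n : ℝ) ^ α)⁻¹) 1).2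
        (Real.summable_nat_rpow_inv.2 hα)
    refine Summable.of_nonneg_of_le (fun k => (inv_pos.2 (hXpos (k + 1) (by omega))).le)
      (fun k => ?_) (h1.mul_left c1⁻¹)
    rw [← mul_inv]
    exact inv_anti₀ (by positivity) (hX1 (k + 1) (by omega))
  set A := ∑' k : ℕ, (X (k + 1))⁻¹ with hA
  have hA0 : 0 ≤ A := tsum_nonneg fun k => (inv_pos.2 (hXpos (k + 1) (by omega))).le
  have hYtop : Tendsto Y atTop atTop := by
    have h1 : Tendsto (fun j => (2 * (A + 1))⁻¹ * Q j) atTop atTop :=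
      hQtop.const_mul_atTop (by positivity)
    refine tendsto_atTop_mono' _ ?_ h1
    filter_upwards [eventually_ge_atTop 1] with j hj
    have hY := hYpos j hj
    have h2 : ∑' k : ℕ, Theta θ (X (k + 1) / T j ^ α) 1 ≤
        ∑' k : ℕ, 2 * Real.pi * Y j * (X (k + 1))⁻¹ := by
      refine (hRT.1 (T j) (hTpos j hj)).tsum_le_tsum (fun k => ?_) (hXinv.mul_left _)
      rw [hTY j hj]
      have h3 := Theta_le_inv θ (X (k + 1) / Y j) (div_pos (hXpos (k + 1) (by omega)) hY)
      rw [inv_div] at h3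
      refine h3.trans (le_of_eq ?_)
      ring
    rw [hQeq j hj, tsum_mul_left, ← hA] at h2
    rw [inv_mul_le_iff₀ (by positivity)]
    have h4 : Real.pi * Q j ≤ Real.pi * (2 * Y j * A) := by linarith
    have h5 := le_of_mul_le_mul_left h4 hpi
    linarith
  have hTtop : Tendsto T atTop atTop :=
    (tendsto_rpow_atTop (inv_pos.2 (by linarith : 0 < α))).comp hYtop
  -- `j / T j → 1`
  have hjT : Tendsto (fun j : ℕ => (j : ℝ) / T j) atTop (𝓝 1) := by
    have h1 := (hRT.2.comp hTtop).div_const Real.pi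
    rw [div_self hpi.ne'] at h1
    have h2 := h1.div hQj one_ne_zero
    rw [div_one] at h2
    refine h2.congr' ?_
    filter_upwards [eventually_ge_atTop 1] with j hj
    have hj0 : (0 : ℝ) < j := by exact_mod_cast hj
    have hq := hQpos j hj
    have ht := hTpos j hj
    simp only [Function.comp, Pi.div_apply]
    rw [hQeq j hj]
    field_simp
  have hS0 := Sfun_zero_pos θ hθ hθπ
  -- rewriting the weights
  have hw : ∀ ε : ℝ, ∀ᶠ j : ℕ in atTop,
      ((j : ℝ) / T j) ^ ε * (((T j)⁻¹ *
        ∑' k : ℕ, Pker θ (X (k + 1) / T j ^ α) 1 * (((k : ℝ) + 1) / T j) ^ (-ε)) /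
        ((T j)⁻¹ * ∑' k : ℕ, Pker θ (X (k + 1) / T j ^ α) 1)) =
      (j : ℝ) ^ ε *
        ((∑' k : ℕ, Pker θ (X (k + 1)) (Y j) * ((k : ℝ) + 1) ^ (-ε)) /
          ∑' k : ℕ, Pker θ (X (k + 1)) (Y j)) := by
    intro ε
    filter_upwards [eventually_ge_atTop 1] with j hj
    have ht := hTpos j hj
    have hte := Real.rpow_pos_of_pos ht ε
    simp only [hPeq j hj]
    have e1 : ∀ k : ℕ, Pker θ (X (k + 1) / T j ^ α) 1 * (((k : ℝ) + 1) / T j) ^ (-ε) =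
        Pker θ (X (k + 1) / T j ^ α) 1 * ((k : ℝ) + 1) ^ (-ε) * T j ^ ε := by
      intro k
      rw [Real.div_rpow (by positivity) ht.le, Real.rpow_neg ht.le ε, div_inv_eq_mul, mul_assoc]
    simp only [e1]
    rw [tsum_mul_right, mul_div_mul_left _ _ (inv_pos.2 ht).ne',
      Real.div_rpow (Nat.cast_nonneg j) ht.le]
    generalize (∑' k : ℕ, Pker θ (X (k + 1) / T j ^ α) 1) = B
    field_simp
  have hpow : ∀ ε : ℝ, Tendsto (fun j : ℕ => ((j : ℝ) / T j) ^ ε) atTop (𝓝 1) := by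
    intro ε
    have := hjT.rpow_const (p := ε) (Or.inl one_ne_zero)
    rwa [Real.one_rpow] at this
  refine ⟨fun j hj => ?_, fun ε hε => ⟨fun hε1 => ?_, fun hε1 => ?_⟩⟩
  · simp only [hPeq j hj]
    exact hRP0.1 (T j) (hTpos j hj)
  · have h1 := (hRP ε hε hε1).2
    rw [← Sfun_eq] at h1
    have h2 := (hpow ε).mul ((h1.comp hTtop).div (hRP0.2.comp hTtop) hS0.ne')
    rw [one_mul] at h2
    exact h2.congr' (hw ε)
  · have h1 := diverge θ α ε c1 hθ hθπ hα hε1 hc1 X hX1 hRP0.1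
    have h2 := (hRP0.2.comp hTtop).inv₀ hS0.ne'
    have h3 := (h1.comp hTtop).atTop_mul_pos (inv_pos.2 hS0) h2
    have h4 := (hpow ε).pos_mul_atTop one_pos h3
    exact h4.congr' (hw ε)
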